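/- Let Φ be a t-uniform purified code state with t ≥ 2, let T ⊆ {1,…,n−1} with |T| = t (qudit n is the last coordinate of T^c), let U be a T-standard-form unitary for Φ, let G_1,…,G_{n−t−1} be any unitaries on ℂ^Q, ε ∈ ℂ^Q a unit vector, Ū the entrywise complex conjugate of U, and let ψ_out := Q^{−t/2} Σ_{s ∈ {0,…,Q−1}^k} Σ_{r ∈ {0,…,Q−1}^{n−t}} U(e_s ⊗ e_{r_1} ⊗ ⋯ ⊗ e_{r_{n−t}}) ⊗ e_{r_{n−t}} ⊗ Ū(e_s ⊗ G_1^† e_{r_1} ⊗ ⋯ ⊗ G_{n−t−1}^† e_{r_{n−t−1}} ⊗ ε), a state on 2t+1 qudits W_1,…,W_t, Ŵ, W_1',…,W_t' (identifying ℂ^{Q^k} ⊗ (ℂ^Q)^{⊗(n−t)} with (ℂ^Q)^{⊗t}). Then for every nonempty J ⊆ {1,…,t} with |J| ≤ t−1, the Schmidt rank of ψ_out across the bipartition ({W_j and W_j' for j ∈ J} | all other qudits) is at least Q² (Lemma C.3). -/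

import Mathlib

open scoped BigOperators

noncomputable section

/-- Combine an assignment on `A` with an assignment on the complement of `A`
into a full computational-basis string. -/
def mergeOn {n Q : ℕ} (A : Finset (Fin n)) (u : {i // i ∈ A} → Fin Q)
    (v : {i // i ∉ A} → Fin Q) : Fin n → Fin Q :=
  fun i => if h : i ∈ A then u ⟨i, h⟩ else v ⟨i, h⟩

/-- Reduced density matrix of a purified code state `Φ` on the qudits in `A`
(the reference register and the qudits outside `A` are traced out). -/
def rdm {Q k n : ℕ} (Φ : (Fin k → Fin Q) → (Fin n → Fin Q) → ℂ)
    (A : Finset (Fin n)) :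
    Matrix ({i // i ∈ A} → Fin Q) ({i // i ∈ A} → Fin Q) ℂ :=
  Matrix.of fun u v => ∑ s : Fin k → Fin Q, ∑ w : {i // i ∉ A} → Fin Q,
    Φ s (mergeOn A u w) * (starRingEnd ℂ) (Φ s (mergeOn A v w))

/-- `Φ` is `t`-uniform: every set of `t` qudits is maximally mixed. -/
def TUniform {Q k n : ℕ} (t : ℕ)
    (Φ : (Fin k → Fin Q) → (Fin n → Fin Q) → ℂ) : Prop :=
  ∀ A : Finset (Fin n), A.card = t →
    rdm Φ A = ((Q : ℂ) ^ t)⁻¹ •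
      (1 : Matrix ({i // i ∈ A} → Fin Q) ({i // i ∈ A} → Fin Q) ℂ)


/-- The state `ψ_out` of Lemma 3.6, in amplitude form, with
`ℂ^{Q^k} ⊗ (ℂ^Q)^{⊗(n-t)}` identified with `(ℂ^Q)^{⊗t}` (via `Fin.append` and the
equality `h1 : t = k + (n - t)`). Registers: the `t` qudits `W_1,…,W_t` (index `a`), the
replacement qudit `Ŵ` (index `x`), and the `t` qudits `W_1',…,W_t'` (index `b`).
`ψ_out = Q^{-t/2} Σ_{s,r} U(e_s ⊗ e_{r_1} ⊗ ⋯ ⊗ e_{r_{n-t}}) ⊗ e_{r_{n-t}} ⊗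
Ū(e_s ⊗ G_1† e_{r_1} ⊗ ⋯ ⊗ G_{n-t-1}† e_{r_{n-t-1}} ⊗ ε)`, where `Ū` is the entrywise
conjugate of `U` and `lst` is the last coordinate of `Fin (n - t)`. -/
def psiOutStd (Q t n k : ℕ) (h1 : t = k + (n - t))
    (U : Matrix (Fin t → Fin Q) (Fin t → Fin Q) ℂ)
    (G : Fin (n - t - 1) → Matrix (Fin Q) (Fin Q) ℂ)
    (ε : Fin Q → ℂ) (lst : Fin (n - t)) :
    (Fin t → Fin Q) → Fin Q → (Fin t → Fin Q) → ℂ :=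
  fun a x b =>
    (Real.sqrt ((Q : ℝ) ^ t) : ℂ)⁻¹ *
      ∑ s : Fin k → Fin Q, ∑ r : Fin (n - t) → Fin Q, ∑ y : Fin (n - t) → Fin Q,
        U a (fun i => Fin.append s r (Fin.cast h1 i)) * (if r lst = x then 1 else 0) *
          (starRingEnd ℂ) (U b (fun i => Fin.append s y (Fin.cast h1 i))) *
          ∏ i : Fin (n - t),
            if h : (i : ℕ) < n - t - 1 then (starRingEnd ℂ) ((G ⟨i, h⟩) (r i) (y i))
            else ε (y i)

/-!
Let `ρ` be the reduced state of `ψ_out` on the qudits `W_j`, `W_j'` with `j ∈ J`. Its rank is at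
least `tr ρ / ‖ρ‖`, and both quantities can be read off from `U`.

Expanding `ψ_out` gives, up to a scalar, `ρ = N Nᴴ`, where `N` is the realignment across `J | Jᶜ` of
`K Vᵀ`: here `K` is `U` with the last free letter turned into an output, and `V` is `Ū` applied to
`G₁† ⊗ ⋯ ⊗ G_{n-t-1}† ⊗ ε`. Since `1 ≤ |J| ≤ t - 1`, uniformity says that, for `A = J` and for
`A = Jᶜ`, the encoded qudits in `A` together with the last free qudit (at most `t` qudits) are
maximally mixed. For `J` this makes one realigned factor `V` of `N` a multiple of a co-isometry, and
for `Jᶜ` it makes the other factor `K` a multiple of an isometry, so that `‖ρ‖` is bounded by the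
product of the two multiples. Unitarity of `U` fixes `tr ρ`, and the quotient is `Q²`.
-/

section LoewnerOrder

open Matrix
open scoped ComplexOrder MatrixOrder

variable {𝕜 m n : Type*} [RCLike 𝕜]

theorem isHermitian_eigenvalues_le [Fintype m] [DecidableEq m] {A : Matrix m m 𝕜}
    (hA : A.IsHermitian) {c : ℝ} (hc : A ≤ c • (1 : Matrix m m 𝕜)) (i : m) :
    hA.eigenvalues i ≤ c := by
  have hnorm : star (hA.eigenvectorBasis i : m → 𝕜) ⬝ᵥ hA.eigenvectorBasis i = 1 := by
    rw [dotProduct_comm, ← EuclideanSpace.inner_eq_star_dotProduct]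
    simp [inner_self_eq_norm_sq_to_K]
  have hpos := (Matrix.le_iff.1 hc).re_dotProduct_nonneg (hA.eigenvectorBasis i : m → 𝕜)
  rw [sub_mulVec, dotProduct_sub, map_sub, ← hA.eigenvalues_eq, smul_mulVec, one_mulVec,
    dotProduct_smul, hnorm, sub_nonneg] at hpos
  simpa [RCLike.smul_re] using hpos

theorem re_trace_le_mul_rank [Fintype m] [DecidableEq m] {A : Matrix m m 𝕜}
    (hA : A.IsHermitian) {c : ℝ} (hc : A ≤ c • (1 : Matrix m m 𝕜)) :
    RCLike.re A.trace ≤ c * A.rank := by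
  calc RCLike.re A.trace
      = ∑ i, hA.eigenvalues i := by simp [hA.trace_eq_sum_eigenvalues]
    _ = ∑ i : {i // hA.eigenvalues i ≠ 0}, hA.eigenvalues i := by
        rw [← Finset.sum_filter_ne_zero]
        exact Finset.sum_subtype _ (by simp) _
    _ ≤ ∑ _i : {i // hA.eigenvalues i ≠ 0}, c :=
        Finset.sum_le_sum fun i _ => isHermitian_eigenvalues_le hA hc i
    _ = c * A.rank := by simp [hA.rank_eq_card_non_zero_eigs, mul_comm]

-- `c - A * Aᴴ` is `c⁻¹` times its own square, because `(A * Aᴴ)² = c • A * Aᴴ`.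
theorem mul_conjTranspose_self_le_smul_one [Fintype m] [DecidableEq m] [Fintype n]
    [DecidableEq n] {A : Matrix m n 𝕜} {c : ℝ} (hc : 0 < c)
    (hA : Aᴴ * A = c • (1 : Matrix n n 𝕜)) : A * Aᴴ ≤ c • (1 : Matrix m m 𝕜) := by
  set D : Matrix m m 𝕜 := c • 1 - A * Aᴴ
  have hD : Dᴴ = D := by simp [D, conjTranspose_sub, conjTranspose_smul]
  have hsq : A * Aᴴ * (A * Aᴴ) = c • (A * Aᴴ) := by
    rw [Matrix.mul_assoc, ← Matrix.mul_assoc Aᴴ, hA, Matrix.smul_mul, Matrix.one_mul,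
      Matrix.mul_smul]
  have hDD : Dᴴ * D = c • D := by
    rw [hD]
    simp only [D, Matrix.sub_mul, Matrix.mul_sub, hsq, Matrix.smul_mul, Matrix.mul_smul,
      Matrix.one_mul, Matrix.mul_one, smul_sub]
    abel
  rw [Matrix.le_iff]
  change D.PosSemidef
  rw [← inv_smul_smul₀ hc.ne' D, ← hDD]
  exact (posSemidef_conjTranspose_mul_self D).smul (inv_nonneg.2 hc.le)

theorem mul_mul_conjTranspose_le [Finite m] [DecidableEq m] [Fintype n] [DecidableEq n]
    {A : Matrix n n 𝕜} {B : Matrix m n 𝕜} {c d : ℝ}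
    (hA : A ≤ c • (1 : Matrix n n 𝕜)) (hB : B * Bᴴ = d • (1 : Matrix m m 𝕜)) :
    B * A * Bᴴ ≤ (c * d) • (1 : Matrix m m 𝕜) := by
  rw [Matrix.le_iff] at hA ⊢
  convert hA.mul_mul_conjTranspose_same B using 1
  rw [Matrix.mul_sub, Matrix.sub_mul, Matrix.mul_smul, Matrix.smul_mul, Matrix.mul_one, hB,
    smul_smul]

end LoewnerOrder

section Realignment

open Matrix Kronecker
open scoped ComplexOrder MatrixOrder

variable {R α β γ δ X Y P : Type*}

/-- Realignment of a bipartite operator: each party's row and column index are grouped together,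
and the first party's pair becomes the row. -/
def realign (M : Matrix (α × γ) (X × P) R) : Matrix (α × X) (γ × P) R :=
  of fun i j => M (i.1, j.1) (i.2, j.2)

/-- Unfolding of a 3-tensor along its first index; the tensor is stored with its third index as
the column. -/
def unfoldFst (V : Matrix (β × δ) P R) : Matrix β (δ × P) R :=
  of fun b j => V (b, j.1) j.2

/-- Unfolding of a 3-tensor along its second index; the tensor is stored with its third index as
the column. -/
def unfoldSnd (K : Matrix (α × Y) P R) : Matrix Y (α × P) R :=
  of fun y j => K (j.1, y) j.2

/-- The bipartite operator `U` with its first input turned into an output. -/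
def moveCol (U : Matrix (α × γ) (X × P) R) : Matrix (α × (γ × X)) P R :=
  of fun i p => U (i.1, i.2.1) (i.2.2, p)

/-- The map `e_p ↦ ε ⊗ W e_p`. -/
def insertState [Mul R] (ε : X → R) (W : Matrix P P R) : Matrix (X × P) P R :=
  of fun i p => ε i.1 * W i.2 p

/-- Contraction of the second tensor factor with `ε`, as a matrix. -/
def contractSnd (β : Type*) [DecidableEq β] [Zero R] (ε : X → R) : Matrix β (β × X) R :=
  of fun b i => if b = i.1 then ε i.2 else 0

theorem trace_realign_mul_conjTranspose [Fintype α] [Fintype γ] [Fintype X] [Fintype P]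
    [NonUnitalNonAssocSemiring R] [Star R] (M : Matrix (α × γ) (X × P) R) :
    (realign M * (realign M)ᴴ).trace = (M * Mᴴ).trace := by
  simp only [trace, diag_apply, mul_apply, conjTranspose_apply, ← Fintype.sum_prod_type']
  exact Fintype.sum_equiv (Equiv.prodProdProdComm α X γ P) _ _ fun _ => rfl

theorem trace_unfoldFst_mul_conjTranspose [Fintype β] [Fintype δ] [Fintype P]
    [NonUnitalNonAssocSemiring R] [Star R] (V : Matrix (β × δ) P R) :
    (unfoldFst V * (unfoldFst V)ᴴ).trace = (V * Vᴴ).trace := by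
  simp only [trace, diag_apply, mul_apply, conjTranspose_apply, ← Fintype.sum_prod_type']
  exact Fintype.sum_equiv (Equiv.prodAssoc β δ P).symm _ _ fun _ => rfl

theorem realign_mul_transpose [Fintype α] [DecidableEq α] [Fintype δ] [DecidableEq δ] [Fintype P]
    [CommSemiring R] (K : Matrix (α × Y) P R) (V : Matrix (β × δ) P R) :
    realign (K * Vᵀ) = (1 ⊗ₖ unfoldFst V : Matrix (α × β) (α × (δ × P)) R) *
      ((unfoldSnd K)ᵀ ⊗ₖ (1 : Matrix δ δ R)).submatrix
        (((Equiv.refl α).prodCongr (Equiv.prodComm δ P)).trans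
          (Equiv.prodAssoc α P δ).symm) id := by
  ext ⟨a, b⟩ ⟨y, d⟩
  simp [realign, unfoldFst, unfoldSnd, mul_apply, Fintype.sum_prod_type, one_apply, mul_comm]

theorem unfoldFst_mul_insertState [Fintype β] [DecidableEq β] [Fintype δ] [DecidableEq δ]
    [Fintype X] [Fintype P] [CommSemiring R] (M : Matrix (β × δ) (X × P) R) (ε : X → R)
    (W : Matrix P P R) :
    unfoldFst (M * insertState ε W) =
      contractSnd β ε * realign M * ((1 : Matrix δ δ R) ⊗ₖ W) := by
  ext b ⟨d, p⟩
  calc unfoldFst (M * insertState ε W) b (d, p)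
      = ∑ x, ∑ q, M (b, d) (x, q) * (ε x * W q p) := by
        simp [unfoldFst, insertState, mul_apply, Fintype.sum_prod_type]
    _ = ∑ q, (∑ x, ε x * M (b, d) (x, q)) * W q p := by
        rw [Finset.sum_comm]
        simp only [Finset.sum_mul, mul_left_comm, mul_assoc]
    _ = _ := by
        simp [contractSnd, realign, mul_apply, Fintype.sum_prod_type, one_apply]

theorem conjTranspose_moveCol_mul_self [Fintype α] [Fintype γ] [Fintype X] [DecidableEq X]
    [DecidableEq P] [Semiring R] [StarRing R] {U : Matrix (α × γ) (X × P) R} (hU : Uᴴ * U = 1) :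
    (moveCol U)ᴴ * moveCol U = Fintype.card X • (1 : Matrix P P R) := by
  ext p p'
  calc ((moveCol U)ᴴ * moveCol U) p p' = ∑ x, (Uᴴ * U) (x, p) (x, p') := by
        simp only [moveCol, mul_apply, conjTranspose_apply, of_apply, Fintype.sum_prod_type]
        simp_rw [Finset.sum_comm (γ := X)]
    _ = _ := by simp [hU, one_apply]

theorem conjTranspose_transpose_mul_transpose [Fintype α] [CommSemiring R] [StarRing R]
    (A : Matrix Y α R) : Aᵀᴴ * Aᵀ = (A * Aᴴ)ᵀ := by
  rw [transpose_mul]; rfl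

variable {𝕜 : Type*} [RCLike 𝕜]

theorem contractSnd_mul_conjTranspose [Fintype X] [Fintype β] [DecidableEq β] (ε : X → 𝕜) :
    contractSnd β ε * (contractSnd β ε)ᴴ = (∑ x, ‖ε x‖ ^ 2) • (1 : Matrix β β 𝕜) := by
  ext b b'
  obtain rfl | hb := eq_or_ne b b'
  · simp [contractSnd, mul_apply, Fintype.sum_prod_type, apply_ite, RCLike.mul_conj,
      Algebra.smul_def]
  · simp [contractSnd, mul_apply, Fintype.sum_prod_type, apply_ite, hb]

theorem unfoldFst_mul_insertState_mul_conjTranspose [Finite β] [DecidableEq β] [Fintype δ]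
    [Fintype X] [DecidableEq X] [Fintype P] [DecidableEq P] {M : Matrix (β × δ) (X × P) 𝕜} {m : ℝ}
    (hM : realign M * (realign M)ᴴ = m • (1 : Matrix (β × X) (β × X) 𝕜))
    {W : Matrix P P 𝕜} (hW : W * Wᴴ = 1) (ε : X → 𝕜) :
    unfoldFst (M * insertState ε W) * (unfoldFst (M * insertState ε W))ᴴ =
      (m * ∑ x, ‖ε x‖ ^ 2) • (1 : Matrix β β 𝕜) := by
  classical
  have := Fintype.ofFinite β
  rw [unfoldFst_mul_insertState]
  set C : Matrix β (β × X) 𝕜 := contractSnd β ε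
  set L : Matrix (δ × P) (δ × P) 𝕜 := 1 ⊗ₖ W
  have hL : L * Lᴴ = 1 := by simp [L, conjTranspose_kronecker, ← mul_kronecker_mul, hW]
  calc C * realign M * L * (C * realign M * L)ᴴ
      = C * (realign M * (L * Lᴴ) * (realign M)ᴴ) * Cᴴ := by
        simp only [conjTranspose_mul, Matrix.mul_assoc]
    _ = m • (C * Cᴴ) := by
        rw [hL, Matrix.mul_one, hM, Matrix.mul_smul, Matrix.mul_one, Matrix.smul_mul]
    _ = _ := by rw [contractSnd_mul_conjTranspose, smul_smul]

theorem trace_mul_transpose_mul_conjTranspose [Fintype α] [Fintype β] [Fintype P] [DecidableEq P]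
    {K : Matrix α P 𝕜} (V : Matrix β P 𝕜) {c : ℝ} (hK : Kᴴ * K = c • (1 : Matrix P P 𝕜)) :
    (K * Vᵀ * (K * Vᵀ)ᴴ).trace = c • (V * Vᴴ).trace := by
  rw [conjTranspose_mul, Matrix.mul_assoc, trace_mul_comm, Matrix.mul_assoc, Matrix.mul_assoc, hK,
    Matrix.mul_smul, Matrix.mul_one, Matrix.mul_smul, trace_smul, trace_mul_comm,
    conjTranspose_transpose_mul_transpose, trace_transpose]

section RankBound

variable [Fintype α] [DecidableEq β] [Fintype δ] [Fintype Y] [DecidableEq Y] [Fintype P]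
  {K : Matrix (α × Y) P 𝕜} {V : Matrix (β × δ) P 𝕜} {l m : ℝ}

theorem realign_mul_transpose_mul_conjTranspose_le [DecidableEq α] [Finite β] (hl : 0 < l)
    (hK : unfoldSnd K * (unfoldSnd K)ᴴ = l • (1 : Matrix Y Y 𝕜))
    (hV : unfoldFst V * (unfoldFst V)ᴴ = m • (1 : Matrix β β 𝕜)) :
    realign (K * Vᵀ) * (realign (K * Vᵀ))ᴴ ≤ (l * m) • (1 : Matrix (α × β) (α × β) 𝕜) := by
  classical
  have := Fintype.ofFinite β
  rw [realign_mul_transpose]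
  generalize ((Equiv.refl α).prodCongr (Equiv.prodComm δ P)).trans (Equiv.prodAssoc α P δ).symm = e
  set L : Matrix (α × β) (α × (δ × P)) 𝕜 := 1 ⊗ₖ unfoldFst V
  set R := ((unfoldSnd K)ᵀ ⊗ₖ (1 : Matrix δ δ 𝕜)).submatrix e id
  have hL : L * Lᴴ = m • (1 : Matrix (α × β) (α × β) 𝕜) := by
    simp [L, conjTranspose_kronecker, ← mul_kronecker_mul, hV, kronecker_smul]
  have hR : Rᴴ * R = l • (1 : Matrix (Y × δ) (Y × δ) 𝕜) := by
    rw [conjTranspose_submatrix, submatrix_mul_equiv, submatrix_id_id, conjTranspose_kronecker,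
      ← mul_kronecker_mul, conjTranspose_transpose_mul_transpose, hK]
    simp [smul_kronecker]
  rw [conjTranspose_mul, Matrix.mul_assoc, ← Matrix.mul_assoc R, ← Matrix.mul_assoc]
  exact mul_mul_conjTranspose_le (mul_conjTranspose_self_le_smul_one hl hR) hL

theorem mul_card_le_mul_rank_realign [Fintype β] [DecidableEq P] {c : ℝ} (hl : 0 < l)
    (hm : 0 < m)
    (hKY : unfoldSnd K * (unfoldSnd K)ᴴ = l • (1 : Matrix Y Y 𝕜))
    (hKP : Kᴴ * K = c • (1 : Matrix P P 𝕜))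
    (hV : unfoldFst V * (unfoldFst V)ᴴ = m • (1 : Matrix β β 𝕜)) :
    c * Fintype.card β ≤ l * (realign (K * Vᵀ)).rank := by
  classical
  have htrace : (realign (K * Vᵀ) * (realign (K * Vᵀ))ᴴ).trace
      = c • m • (Fintype.card β : 𝕜) := by
    rw [trace_realign_mul_conjTranspose, trace_mul_transpose_mul_conjTranspose V hKP,
      ← trace_unfoldFst_mul_conjTranspose, hV, trace_smul, trace_one]
  have hrank := re_trace_le_mul_rank (isHermitian_mul_conjTranspose_self _)
    (realign_mul_transpose_mul_conjTranspose_le hl hKY hV)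
  rw [rank_self_mul_conjTranspose, htrace, RCLike.smul_re, RCLike.smul_re,
    RCLike.natCast_re] at hrank
  refine le_of_mul_le_mul_left ?_ hm
  linarith

end RankBound

theorem card_mul_card_le_mul_rank_realign [Fintype α] [DecidableEq α] [Fintype γ] [DecidableEq γ]
    [Fintype X] [DecidableEq X] [Fintype P] [DecidableEq P] {U : Matrix (α × γ) (X × P) 𝕜}
    (hU : Uᴴ * U = 1) {l m : ℝ} (hl : 0 < l) (hm : 0 < m)
    (hUγ : realign (U.submatrix Prod.swap id) * (realign (U.submatrix Prod.swap id))ᴴ =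
      l • (1 : Matrix (γ × X) (γ × X) 𝕜))
    (hUα : realign U * (realign U)ᴴ = m • (1 : Matrix (α × X) (α × X) 𝕜))
    {W : Matrix P P 𝕜} (hW : W * Wᴴ = 1) {ε : X → 𝕜} (hε : ε ≠ 0) :
    (Fintype.card X * Fintype.card α : ℝ) ≤
      l * (realign (moveCol U * (U.map star * insertState ε W)ᵀ)).rank := by
  have hε_pos : 0 < ∑ x, ‖ε x‖ ^ 2 := by
    obtain ⟨x, hx⟩ := Function.ne_iff.1 hε
    exact Finset.sum_pos' (fun _ _ => by positivity)
      ⟨x, Finset.mem_univ x, pow_pos (norm_pos_iff.2 hx) 2⟩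
  refine mul_card_le_mul_rank_realign hl (mul_pos hm hε_pos) hUγ
    (by rw [conjTranspose_moveCol_mul_self hU, Nat.cast_smul_eq_nsmul]) ?_
  refine unfoldFst_mul_insertState_mul_conjTranspose ?_ hW ε
  have hmap : realign (U.map star) * (realign (U.map star))ᴴ =
      (realign U * (realign U)ᴴ).map star := by
    ext i j
    simp [realign, mul_apply, mul_comm]
  rw [hmap, hUα]
  ext i j
  obtain rfl | hij := eq_or_ne i j
  · simp [RCLike.real_smul_eq_coe_mul]
  · simp [hij]

end Realignment

section PiKronecker

open Matrix

variable {ι R : Type*} {κ μ ν : ι → Type*} [Fintype ι]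

/-- The tensor product of a finite family of matrices, indexed by strings. -/
def piKronecker [CommSemiring R] (A : ∀ i, Matrix (κ i) (μ i) R) : Matrix (∀ i, κ i) (∀ i, μ i) R :=
  of fun r c => ∏ i, A i (r i) (c i)

theorem piKronecker_mul [DecidableEq ι] [∀ i, Fintype (μ i)] [CommSemiring R]
    (A : ∀ i, Matrix (κ i) (μ i) R) (B : ∀ i, Matrix (μ i) (ν i) R) :
    piKronecker A * piKronecker B = piKronecker fun i => A i * B i := by
  ext r c
  simp [piKronecker, mul_apply, Fintype.prod_sum, Finset.prod_mul_distrib]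

theorem piKronecker_one [CommSemiring R] [∀ i, DecidableEq (κ i)] :
    piKronecker (fun i => (1 : Matrix (κ i) (κ i) R)) = 1 := by
  ext r c
  simp [piKronecker, one_apply, Finset.prod_ite_zero, funext_iff]

theorem conjTranspose_piKronecker [CommSemiring R] [StarRing R] (A : ∀ i, Matrix (κ i) (μ i) R) :
    (piKronecker A)ᴴ = piKronecker fun i => (A i)ᴴ := by
  ext r c
  simp [piKronecker]

theorem piKronecker_mem_unitaryGroup [DecidableEq ι] [∀ i, Fintype (κ i)]
    [∀ i, DecidableEq (κ i)] [CommRing R] [StarRing R] {A : ∀ i, Matrix (κ i) (κ i) R}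
    (hA : ∀ i, A i ∈ unitaryGroup (κ i) R) :
    piKronecker A ∈ unitaryGroup (∀ i, κ i) R := by
  rw [mem_unitaryGroup_iff, star_eq_conjTranspose, conjTranspose_piKronecker, piKronecker_mul]
  simp only [← star_eq_conjTranspose, mem_unitaryGroup_iff.1 (hA _), piKronecker_one]

end PiKronecker

section Glue

variable {a b c ι q : Type*}

/-- Joins two partial assignments along a splitting `a ⊕ b ≃ ι` of the index set. -/
def glue (e : a ⊕ b ≃ ι) : (a → q) × (b → q) ≃ (ι → q) :=
  (Equiv.sumArrowEquivProdArrow a b q).symm.trans (e.arrowCongr (Equiv.refl q))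

theorem glue_apply_inl (e : a ⊕ b ≃ ι) (p : (a → q) × (b → q)) (i : a) :
    glue e p (e (Sum.inl i)) = p.1 i := by
  simp only [glue, Equiv.trans_apply, Equiv.arrowCongr_apply, Function.comp_apply,
    Equiv.symm_apply_apply]
  rfl

theorem glue_apply_inr (e : a ⊕ b ≃ ι) (p : (a → q) × (b → q)) (i : b) :
    glue e p (e (Sum.inr i)) = p.2 i := by
  simp only [glue, Equiv.trans_apply, Equiv.arrowCongr_apply, Function.comp_apply,
    Equiv.symm_apply_apply]
  rfl

theorem glue_glue {b' : Type*} (e : a ⊕ b ≃ ι) (f : c ⊕ b' ≃ b) (u : a → q) (w₁ : c → q)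
    (w₂ : b' → q) :
    glue e (u, glue f (w₁, w₂)) =
      glue ((Equiv.sumAssoc a c b').trans (((Equiv.refl a).sumCongr f).trans e))
        (Sum.elim u w₁, w₂) := by
  funext i
  obtain ⟨(x | y) | z, rfl⟩ :=
    ((Equiv.sumAssoc a c b').trans (((Equiv.refl a).sumCongr f).trans e)).surjective i
  · rw [glue_apply_inl]
    exact glue_apply_inl e _ x
  · rw [glue_apply_inl]
    exact (glue_apply_inr e _ (f (.inl y))).trans (glue_apply_inl f _ y)
  · rw [glue_apply_inr]
    exact (glue_apply_inr e _ (f (.inr z))).trans (glue_apply_inr f _ z)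

theorem glue_sumComm (e : a ⊕ b ≃ ι) (p : (b → q) × (a → q)) :
    glue ((Equiv.sumComm b a).trans e) p = glue e p.swap := by
  funext i
  obtain ⟨x | y, rfl⟩ := e.surjective i
  · rw [glue_apply_inl]
    exact glue_apply_inr ((Equiv.sumComm b a).trans e) p x
  · rw [glue_apply_inr]
    exact glue_apply_inl ((Equiv.sumComm b a).trans e) p y

theorem submatrix_glue_sumComm {m n R : Type*} (e : a ⊕ b ≃ ι)
    (M : Matrix (ι → q) n R) (g : m → n) :
    M.submatrix (glue ((Equiv.sumComm b a).trans e)) g =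
      (M.submatrix (glue e) g).submatrix Prod.swap id := by
  ext i j
  simp only [Matrix.submatrix_apply, glue_sumComm, id]

theorem glue_sumCompl {n Q : ℕ} (A : Finset (Fin n))
    (p : ({i // i ∈ A} → Fin Q) × ({i // i ∉ A} → Fin Q)) :
    glue (Equiv.sumCompl (· ∈ A)) p = mergeOn A p.1 p.2 := by
  funext i
  by_cases hi : i ∈ A
  · exact (glue_apply_inl (Equiv.sumCompl (· ∈ A)) p ⟨i, hi⟩).trans (by simp [mergeOn, hi])
  · exact (glue_apply_inr (Equiv.sumCompl (· ∈ A)) p ⟨i, hi⟩).trans (by simp [mergeOn, hi])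

end Glue

section Uniform

variable {Q k n t : ℕ} {Φ : (Fin k → Fin Q) → (Fin n → Fin Q) → ℂ}
  {a b : Type*} [Fintype a] [Fintype b] [DecidableEq b]

theorem TUniform.sum_glue_of_card_eq (h : TUniform t Φ) (e : a ⊕ b ≃ Fin n)
    (ha : Fintype.card a = t) (u v : a → Fin Q) :
    ∑ s, ∑ w : b → Fin Q, Φ s (glue e (u, w)) * star (Φ s (glue e (v, w))) =
      if u = v then ((Q : ℂ) ^ t)⁻¹ else 0 := by
  let A : Finset (Fin n) := Finset.univ.map (Function.Embedding.inl.trans e.toEmbedding)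
  have hA : A.card = t := by simp [A, ha]
  have hl (x : a) : e (Sum.inl x) ∈ A := by simp [A]
  have hr (y : b) : e (Sum.inr y) ∉ A := by simp [A]
  let eA : a ≃ {i // i ∈ A} := Equiv.ofBijective (fun x => ⟨e (Sum.inl x), hl x⟩)
    ⟨fun x y hxy => by simpa using hxy, fun ⟨i, hi⟩ => by simpa [A] using hi⟩
  let eB : b ≃ {i // i ∉ A} := Equiv.ofBijective (fun x => ⟨e (Sum.inr x), hr x⟩)
    ⟨fun x y hxy => by simpa using hxy, fun ⟨i, hi⟩ => by
      obtain ⟨x | y, rfl⟩ := e.surjective i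
      · exact absurd (hl x) hi
      · exact ⟨y, rfl⟩⟩
  have hglue (u : a → Fin Q) (w : b → Fin Q) :
      mergeOn A (u ∘ eA.symm) (w ∘ eB.symm) = glue e (u, w) := by
    funext i
    obtain ⟨x | y, rfl⟩ := e.surjective i
    · rw [glue_apply_inl]
      simp only [mergeOn, hl, dif_pos]
      exact congrArg u (eA.symm_apply_apply x)
    · rw [glue_apply_inr]
      simp only [mergeOn, hr, dif_neg, not_false_iff]
      exact congrArg w (eB.symm_apply_apply y)
  have hentry := congrFun₂ (h A hA) (u ∘ eA.symm) (v ∘ eA.symm)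
  simp only [rdm, Matrix.of_apply, Matrix.smul_apply, Matrix.one_apply,
    eA.symm.surjective.injective_comp_right.eq_iff, smul_eq_mul,
    mul_ite, mul_one, mul_zero] at hentry
  rw [← hentry]
  refine Finset.sum_congr rfl fun s _ => ?_
  refine Fintype.sum_equiv (eB.arrowCongr (Equiv.refl _)) _ _ fun w => ?_
  simp only [← hglue]
  rfl

theorem TUniform.sum_glue (h : TUniform t Φ) (hQ : Q ≠ 0) (htn : t ≤ n) (e : a ⊕ b ≃ Fin n)
    (ha : Fintype.card a ≤ t) (u v : a → Fin Q) :
    ∑ s, ∑ w : b → Fin Q, Φ s (glue e (u, w)) * star (Φ s (glue e (v, w))) =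
      if u = v then ((Q : ℂ) ^ Fintype.card a)⁻¹ else 0 := by
  have hcard : Fintype.card a + Fintype.card b = n := by simpa using Fintype.card_congr e
  obtain ⟨B, hB⟩ : ∃ B : Finset b, B.card = t - Fintype.card a :=
    (Finset.exists_subset_card_eq (s := Finset.univ) (by rw [Finset.card_univ]; lia)).imp
      fun _ => And.right
  let f : {i // i ∈ B} ⊕ {i // i ∉ B} ≃ b := Equiv.sumCompl (· ∈ B)
  let e' : (a ⊕ {i // i ∈ B}) ⊕ {i // i ∉ B} ≃ Fin n :=
    (Equiv.sumAssoc _ _ _).trans (((Equiv.refl a).sumCongr f).trans e)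
  have hcard' : Fintype.card (a ⊕ {i // i ∈ B}) = t := by
    rw [Fintype.card_sum, Fintype.card_coe, hB]; lia
  calc _ = ∑ s, ∑ w₁ : {i // i ∈ B} → Fin Q, ∑ w₂ : {i // i ∉ B} → Fin Q,
        Φ s (glue e' (Sum.elim u w₁, w₂)) * star (Φ s (glue e' (Sum.elim v w₁, w₂))) := by
        refine Finset.sum_congr rfl fun s _ => ?_
        rw [← (glue f).sum_comp, Fintype.sum_prod_type]
        simp only [glue_glue, e']
    _ = ∑ w₁ : {i // i ∈ B} → Fin Q,
        if Sum.elim u w₁ = Sum.elim v w₁ then ((Q : ℂ) ^ t)⁻¹ else 0 := by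
        rw [Finset.sum_comm]
        simp_rw [h.sum_glue_of_card_eq e' hcard']
    _ = ((Q ^ (t - Fintype.card a) : ℕ) : ℂ) * if u = v then ((Q : ℂ) ^ t)⁻¹ else 0 := by
        simp [Sum.elim_eq_iff, hB]
    _ = _ := by
        have hQC : (Q : ℂ) ≠ 0 := by exact_mod_cast hQ
        have hpow : (Q : ℂ) ^ t = (Q : ℂ) ^ (t - Fintype.card a) * (Q : ℂ) ^ Fintype.card a := by
          rw [← pow_add, Nat.sub_add_cancel ha]
        rw [hpow, mul_inv, mul_ite, Nat.cast_pow, mul_inv_cancel_left₀ (pow_ne_zero _ hQC),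
          mul_zero]

end Uniform

section StandardForm

open Matrix

variable {Q k m n t : ℕ}

/-- Column index of a standard-form unitary: a letter `x` at position `lst` of the free qudits, the
reference string `s` and the remaining free letters `r`, in the order used by `psiOutStd`. -/
def columnEquiv (h : t = k + m) (lst : Fin m) :
    Fin Q × ((Fin k → Fin Q) × ({j // j ≠ lst} → Fin Q)) ≃ (Fin t → Fin Q) :=
  (Equiv.prodAssoc _ _ _).symm.trans <|
    ((Equiv.prodComm _ _).prodCongr (Equiv.refl _)).trans <|
    (Equiv.prodAssoc _ _ _).trans <|
    ((Equiv.refl _).prodCongr (Equiv.funSplitAt lst (Fin Q)).symm).trans <|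
    (Fin.appendEquiv k m).trans ((finCongr h).symm.arrowCongr (Equiv.refl _))

theorem columnEquiv_apply (h : t = k + m) (lst : Fin m) (x : Fin Q) (s : Fin k → Fin Q)
    (r : {j // j ≠ lst} → Fin Q) :
    columnEquiv h lst (x, s, r) =
      fun i => Fin.append s ((Equiv.funSplitAt lst (Fin Q)).symm (x, r)) (Fin.cast h i) :=
  rfl

/-- `U` is a standard-form unitary (unitarity not included) of `Φ` for the splitting `e` of the
qudits into `t` encoded ones and `m` free ones. -/
def IsStandardForm (h : t = k + m) (e : Fin t ⊕ Fin m ≃ Fin n)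
    (Φ : (Fin k → Fin Q) → (Fin n → Fin Q) → ℂ) (U : Matrix (Fin t → Fin Q) (Fin t → Fin Q) ℂ) :
    Prop :=
  ∀ s w r, Φ s (glue e (w, r)) =
    (Real.sqrt ((Q : ℝ) ^ t) : ℂ)⁻¹ * U w fun i => Fin.append s r (Fin.cast h i)

theorem isStandardForm_finSumEquivOfFinset {h : t = k + m}
    {Φ : (Fin k → Fin Q) → (Fin n → Fin Q) → ℂ} {U : Matrix (Fin t → Fin Q) (Fin t → Fin Q) ℂ}
    {T : Finset (Fin n)} {hT : T.card = t} {hTc : Tᶜ.card = m}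
    (hU : ∀ s w, Φ s w = (Real.sqrt ((Q : ℝ) ^ t) : ℂ)⁻¹ *
      U (fun i => w (T.orderEmbOfFin hT i))
        (fun i => Fin.append s (fun j => w (Tᶜ.orderEmbOfFin hTc j)) (Fin.cast h i))) :
    IsStandardForm h (finSumEquivOfFinset hT hTc) Φ U := by
  intro s w r
  rw [hU]
  simp only [← finSumEquivOfFinset_inl hT hTc, ← finSumEquivOfFinset_inr hT hTc, glue_apply_inl,
    glue_apply_inr]

/-- The splitting of all qudits into `a` with the free qudit `lst`, and `b` with the other free
qudits, where `a` and `b` split the encoded qudits. -/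
def regroup {a b : Type*} (e : Fin t ⊕ Fin m ≃ Fin n) (f : a ⊕ b ≃ Fin t) (lst : Fin m) :
    (a ⊕ {j // j = lst}) ⊕ (b ⊕ {j // j ≠ lst}) ≃ Fin n :=
  (Equiv.sumSumSumComm _ _ _ _).trans ((f.sumCongr (Equiv.sumCompl (· = lst))).trans e)

theorem glue_regroup {a b : Type*} (e : Fin t ⊕ Fin m ≃ Fin n) (f : a ⊕ b ≃ Fin t)
    (lst : Fin m) (u : a → Fin Q) (x : Fin Q) (w : b → Fin Q) (r : {j // j ≠ lst} → Fin Q) :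
    glue (regroup e f lst) (Sum.elim u fun _ => x, Sum.elim w r) =
      glue e (glue f (u, w), (Equiv.funSplitAt lst (Fin Q)).symm (x, r)) := by
  funext i
  obtain ⟨(i | j) | (i | j), rfl⟩ := (regroup e f lst).surjective i
  · rw [glue_apply_inl]
    exact ((glue_apply_inl e _ (f (.inl i))).trans (glue_apply_inl f _ i)).symm
  · rw [glue_apply_inl]
    exact ((glue_apply_inr e _ j.1).trans (by simp [j.2])).symm
  · rw [glue_apply_inr]
    exact ((glue_apply_inl e _ (f (.inr i))).trans (glue_apply_inr f _ i)).symm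
  · rw [glue_apply_inr]
    exact ((glue_apply_inr e _ j.1).trans (by simp [j.2])).symm

section Uniformity

variable {h : t = k + m} {e : Fin t ⊕ Fin m ≃ Fin n} {Φ : (Fin k → Fin Q) → (Fin n → Fin Q) → ℂ}
  {U : Matrix (Fin t → Fin Q) (Fin t → Fin Q) ℂ} {a b : Type*} [Fintype b] [DecidableEq b]

theorem IsStandardForm.realign_mul_conjTranspose_apply (hU : IsStandardForm h e Φ U) (hQ : Q ≠ 0)
    (lst : Fin m) (f : a ⊕ b ≃ Fin t) (u v : a → Fin Q) (x y : Fin Q) :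
    (realign (U.submatrix (glue f) (columnEquiv h lst)) *
        (realign (U.submatrix (glue f) (columnEquiv h lst)))ᴴ) (u, x) (v, y) =
      (Q : ℂ) ^ t * ∑ s, ∑ w : b ⊕ {j // j ≠ lst} → Fin Q,
        Φ s (glue (regroup e f lst) (Sum.elim u fun _ => x, w)) *
          star (Φ s (glue (regroup e f lst) (Sum.elim v fun _ => y, w))) := by
  have hentry (u : a → Fin Q) (x : Fin Q) (w : b → Fin Q) (s) (r : {j // j ≠ lst} → Fin Q) :
      U (glue f (u, w)) (columnEquiv h lst (x, s, r)) = Real.sqrt ((Q : ℝ) ^ t) *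
        Φ s (glue (regroup e f lst) (Sum.elim u fun _ => x, Sum.elim w r)) := by
    rw [glue_regroup, hU, mul_inv_cancel_left₀, columnEquiv_apply]
    simp [hQ]
  have hsqrt : (Real.sqrt ((Q : ℝ) ^ t) : ℂ) * Real.sqrt ((Q : ℝ) ^ t) = (Q : ℂ) ^ t := by
    rw [← Complex.ofReal_mul, Real.mul_self_sqrt (by positivity), Complex.ofReal_pow,
      Complex.ofReal_natCast]
  simp only [mul_apply, conjTranspose_apply, realign, of_apply, submatrix_apply,
    Fintype.sum_prod_type, hentry]
  rw [Finset.sum_comm, Finset.mul_sum]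
  refine Finset.sum_congr rfl fun s _ => ?_
  rw [← (Equiv.sumArrowEquivProdArrow b {j // j ≠ lst} (Fin Q)).symm.sum_comp,
    Fintype.sum_prod_type, Finset.mul_sum]
  refine Finset.sum_congr rfl fun w _ => ?_
  rw [Finset.mul_sum]
  refine Finset.sum_congr rfl fun r _ => ?_
  rw [star_mul', Complex.star_def, Complex.conj_ofReal, mul_mul_mul_comm, hsqrt]
  rfl

theorem TUniform.realign_mul_conjTranspose (hΦ : TUniform t Φ) (hQ : Q ≠ 0)
    (hU : IsStandardForm h e Φ U) (lst : Fin m) [Fintype a] [Nonempty b] (f : a ⊕ b ≃ Fin t) :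
    realign (U.submatrix (glue f) (columnEquiv h lst)) *
        (realign (U.submatrix (glue f) (columnEquiv h lst)))ᴴ =
      ((Q : ℝ) ^ (Fintype.card b - 1)) • (1 : Matrix ((a → Fin Q) × Fin Q) _ ℂ) := by
  have hcard : Fintype.card a + Fintype.card b = t := by simpa using Fintype.card_congr f
  have hcard_add : Fintype.card (a ⊕ {j // j = lst}) = Fintype.card a + 1 := by simp
  have hb : 0 < Fintype.card b := Fintype.card_pos
  have htn : t + m = n := by simpa using Fintype.card_congr e
  have hpow : (Q : ℂ) ^ t * ((Q : ℂ) ^ (Fintype.card a + 1))⁻¹ =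
      (Q : ℂ) ^ (Fintype.card b - 1) := by
    rw [show t = (Fintype.card b - 1) + (Fintype.card a + 1) by lia, pow_add,
      mul_inv_cancel_right₀ (pow_ne_zero _ (Nat.cast_ne_zero.2 hQ))]
  ext ⟨u, x⟩ ⟨v, y⟩
  rw [hU.realign_mul_conjTranspose_apply hQ, hΦ.sum_glue hQ (by lia) _ (by lia), hcard_add]
  simp [Sum.elim_eq_iff, funext_iff (α := {j // j = lst}), one_apply, hpow]

end Uniformity

end StandardForm

section OutputState

open Matrix Kronecker

variable {Q t n k : ℕ}

/-- `1 ⊗ G₁† ⊗ ⋯ ⊗ G_{m-1}†`, acting on the reference string and on all free qudits except the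
last one. -/
def gateMatrix {m : ℕ} (k : ℕ) (G : Fin (m - 1) → Matrix (Fin Q) (Fin Q) ℂ) {lst : Fin m}
    (hlst : (lst : ℕ) = m - 1) :
    Matrix ((Fin k → Fin Q) × ({j // j ≠ lst} → Fin Q))
      ((Fin k → Fin Q) × ({j // j ≠ lst} → Fin Q)) ℂ :=
  1 ⊗ₖ piKronecker fun j : {j // j ≠ lst} => (G ⟨j, by have := Fin.val_ne_of_ne j.2; lia⟩)ᴴ

theorem gateMatrix_mul_conjTranspose {m : ℕ} {G : Fin (m - 1) → Matrix (Fin Q) (Fin Q) ℂ}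
    {lst : Fin m} (hlst : (lst : ℕ) = m - 1) (hG : ∀ i, G i ∈ unitaryGroup (Fin Q) ℂ) :
    gateMatrix k G hlst * (gateMatrix k G hlst)ᴴ = 1 :=
  mem_unitaryGroup_iff.1 <| kronecker_mem_unitary (one_mem _) <|
    piKronecker_mem_unitaryGroup fun _ => Unitary.star_mem (hG _)

theorem prod_dite_gate {m : ℕ} (G : Fin (m - 1) → Matrix (Fin Q) (Fin Q) ℂ) (ε : Fin Q → ℂ)
    {lst : Fin m} (hlst : (lst : ℕ) = m - 1) (x z : Fin Q) (r y : {j // j ≠ lst} → Fin Q) :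
    (∏ i : Fin m, if h : (i : ℕ) < m - 1 then
        star (G ⟨i, h⟩ ((Equiv.funSplitAt lst (Fin Q)).symm (x, r) i)
          ((Equiv.funSplitAt lst (Fin Q)).symm (z, y) i))
      else ε ((Equiv.funSplitAt lst (Fin Q)).symm (z, y) i)) =
    ε z * piKronecker (fun j : {j // j ≠ lst} =>
      (G ⟨j, by have := Fin.val_ne_of_ne j.2; lia⟩)ᴴ) y r := by
  rw [Fintype.prod_eq_mul_prod_subtype_ne _ lst, dif_neg (by lia)]
  congr 1
  · simp
  · refine Finset.prod_congr rfl fun j _ => ?_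
    have hj : (j : ℕ) < m - 1 := by have := Fin.val_ne_of_ne j.2; lia
    simp [hj, j.2]

theorem psiOutStd_eq (h : t = k + (n - t)) (U : Matrix (Fin t → Fin Q) (Fin t → Fin Q) ℂ)
    (G : Fin (n - t - 1) → Matrix (Fin Q) (Fin Q) ℂ) (ε : Fin Q → ℂ) {lst : Fin (n - t)}
    (hlst : (lst : ℕ) = n - t - 1) (a b : Fin t → Fin Q) (x : Fin Q) :
    psiOutStd Q t n k h U G ε lst a x b =
      (Real.sqrt ((Q : ℝ) ^ t) : ℂ)⁻¹ * ∑ p, U a (columnEquiv h lst (x, p)) *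
        ∑ i, star (U b (columnEquiv h lst i)) * insertState ε (gateMatrix k G hlst) i p := by
  unfold psiOutStd
  congr 1
  rw [Fintype.sum_prod_type]
  refine Finset.sum_congr rfl fun s _ => ?_
  rw [← (Equiv.funSplitAt lst (Fin Q)).symm.sum_comp, Fintype.sum_prod_type,
    Finset.sum_eq_single x (fun z _ hz => by simp [hz]) (by simp)]
  refine Finset.sum_congr rfl fun r _ => ?_
  rw [← (Equiv.funSplitAt lst (Fin Q)).symm.sum_comp, Fintype.sum_prod_type, Fintype.sum_prod_type,
    Finset.mul_sum]
  refine Finset.sum_congr rfl fun z _ => ?_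
  rw [Fintype.sum_prod_type, Finset.sum_eq_single s, Finset.mul_sum]
  · refine Finset.sum_congr rfl fun y _ => ?_
    simp only [starRingEnd_apply]
    rw [prod_dite_gate G ε hlst]
    simp [insertState, gateMatrix, columnEquiv_apply, mul_assoc]
  · intro s' _ hs'
    simp [insertState, gateMatrix, hs']
  · simp

theorem rank_psiOutStd_eq_rank_realign (hQ : Q ≠ 0) (h : t = k + (n - t))
    (U : Matrix (Fin t → Fin Q) (Fin t → Fin Q) ℂ) (G : Fin (n - t - 1) → Matrix (Fin Q) (Fin Q) ℂ)
    (ε : Fin Q → ℂ) {lst : Fin (n - t)} (hlst : (lst : ℕ) = n - t - 1) (J : Finset (Fin t)) :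
    (of fun (u : ({i // i ∈ J} → Fin Q) × ({i // i ∈ J} → Fin Q))
        (c : ({i // i ∉ J} → Fin Q) × Fin Q × ({i // i ∉ J} → Fin Q)) =>
      psiOutStd Q t n k h U G ε lst (mergeOn J u.1 c.1) c.2.1 (mergeOn J u.2 c.2.2)).rank =
    (realign
      (moveCol (U.submatrix (glue (Equiv.sumCompl (· ∈ J))) (columnEquiv h lst)) *
        ((U.submatrix (glue (Equiv.sumCompl (· ∈ J))) (columnEquiv h lst)).map star *
          insertState ε (gateMatrix k G hlst))ᵀ)).rank := by
  rw [← rank_smul_of_mem_nonZeroDivisors (realign _)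
      (mem_nonZeroDivisors_of_ne_zero (x := (Real.sqrt ((Q : ℝ) ^ t) : ℂ)⁻¹) (by simp [hQ])),
    ← rank_submatrix (_ • realign _) (Equiv.refl _) (Equiv.prodAssoc _ _ _).symm]
  congr 1
  ext ⟨u, u'⟩ ⟨c, x, c'⟩
  simp [psiOutStd_eq _ _ _ _ hlst, realign, moveCol, mul_apply, glue_sumCompl, -transpose_mul]

end OutputState

theorem stmt_11_general {Q t n k : ℕ} (h : t = k + (n - t))
    {Φ : (Fin k → Fin Q) → (Fin n → Fin Q) → ℂ} (hΦ : TUniform t Φ)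
    {e : Fin t ⊕ Fin (n - t) ≃ Fin n} {U : Matrix (Fin t → Fin Q) (Fin t → Fin Q) ℂ}
    (hU : U ∈ Matrix.unitaryGroup (Fin t → Fin Q) ℂ) (hUΦ : IsStandardForm h e Φ U)
    {G : Fin (n - t - 1) → Matrix (Fin Q) (Fin Q) ℂ}
    (hG : ∀ i, G i ∈ Matrix.unitaryGroup (Fin Q) ℂ) {ε : Fin Q → ℂ} (hε : ε ≠ 0)
    {lst : Fin (n - t)} (hlst : (lst : ℕ) = n - t - 1) {J : Finset (Fin t)} (hJ : J.Nonempty)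
    (hJt : J.card ≤ t - 1) :
    Q ^ 2 ≤
      (Matrix.of fun (u : ({i // i ∈ J} → Fin Q) × ({i // i ∈ J} → Fin Q))
          (c : ({i // i ∉ J} → Fin Q) × Fin Q × ({i // i ∉ J} → Fin Q)) =>
        psiOutStd Q t n k h U G ε lst (mergeOn J u.1 c.1) c.2.1 (mergeOn J u.2 c.2.2)).rank := by
  have hQ : Q ≠ 0 := by
    obtain ⟨x, -⟩ := Function.ne_iff.1 hε
    exact x.pos.ne'
  have hQ_pow (i : ℕ) : (0 : ℝ) < (Q : ℝ) ^ i := by positivity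
  have hJ_pos := hJ.card_pos
  have : Nonempty {i // i ∈ J} := hJ.to_subtype
  have : Nonempty {i // i ∉ J} := by
    obtain ⟨i, hi⟩ := Finset.exists_mem_notMem_of_card_lt_card (s := J) (t := Finset.univ)
      (by rw [Finset.card_fin]; lia)
    exact ⟨i, hi.2⟩
  let f : {i // i ∈ J} ⊕ {i // i ∉ J} ≃ Fin t := Equiv.sumCompl (· ∈ J)
  have hunitary : (U.submatrix (glue f) (columnEquiv h lst)).conjTranspose *
      U.submatrix (glue f) (columnEquiv h lst) = 1 := by
    rw [Matrix.conjTranspose_submatrix, Matrix.submatrix_mul_equiv, ← Matrix.star_eq_conjTranspose,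
      Matrix.mem_unitaryGroup_iff'.1 hU, Matrix.submatrix_one_equiv]
  have hswap := hΦ.realign_mul_conjTranspose hQ hUΦ lst ((Equiv.sumComm _ _).trans f)
  rw [submatrix_glue_sumComm] at hswap
  have hbound := card_mul_card_le_mul_rank_realign hunitary (hQ_pow _) (hQ_pow _) hswap
    (hΦ.realign_mul_conjTranspose hQ hUΦ lst f) (gateMatrix_mul_conjTranspose hlst hG) hε
  rw [← rank_psiOutStd_eq_rank_realign hQ, Fintype.card_fin, Fintype.card_fun, Fintype.card_fin,
    Fintype.card_coe] at hbound
  have hpow : Q * Q ^ J.card = Q ^ (J.card - 1) * Q ^ 2 := by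
    rw [← pow_succ', ← pow_add]
    congr 1
    lia
  refine Nat.le_of_mul_le_mul_left ?_ (pow_pos (Nat.pos_of_ne_zero hQ) (J.card - 1))
  rw [← hpow]
  exact_mod_cast hbound

/-- Lemma C.3.  With `U` a `T`-standard-form unitary of the `t`-uniform
state `Φ` (where `T ⊆ {1,…,n-1}`, qudit `n` being the last coordinate of `T^c`), arbitrary
unitaries `G_i` and a unit vector `ε`, the Schmidt rank of `ψ_out` across the bipartition
`({W_j, W_j' : j ∈ J} | all other qudits)` is at least `Q²` for every nonempty
`J ⊆ {1,…,t}` with `|J| ≤ t - 1`. -/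
theorem stmt_11 (Q t n : ℕ) (hQ : 2 ≤ Q) (ht : 2 ≤ t) (htn : t < n) (hn : n ≤ 2 * t)
    (k : ℕ) (hk : k = 2 * t - n)
    (Φ : (Fin k → Fin Q) → (Fin n → Fin Q) → ℂ)
    (hnorm : ∑ s : Fin k → Fin Q, ∑ w : Fin n → Fin Q,
      Φ s w * (starRingEnd ℂ) (Φ s w) = 1)
    (huniform : TUniform t Φ)
    (T : Finset (Fin n)) (hT : T.card = t) (hTc : Tᶜ.card = n - t)
    (hTsub : ∀ i ∈ T, (i : ℕ) < n - 1)
    (U : Matrix (Fin t → Fin Q) (Fin t → Fin Q) ℂ)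
    (hUuni : U ∈ Matrix.unitaryGroup (Fin t → Fin Q) ℂ)
    (hUstd : ∀ (s : Fin k → Fin Q) (w : Fin n → Fin Q),
      Φ s w = (Real.sqrt ((Q : ℝ) ^ t) : ℂ)⁻¹ *
        U (fun i => w (T.orderEmbOfFin hT i))
          (fun i => Fin.append s (fun j => w (Tᶜ.orderEmbOfFin hTc j))
            (Fin.cast (by omega : t = k + (n - t)) i)))
    (G : Fin (n - t - 1) → Matrix (Fin Q) (Fin Q) ℂ)
    (hG : ∀ i, G i ∈ Matrix.unitaryGroup (Fin Q) ℂ)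
    (ε : Fin Q → ℂ) (hε : ∑ m : Fin Q, ε m * (starRingEnd ℂ) (ε m) = 1) :
    ∀ J : Finset (Fin t), J.Nonempty → J.card ≤ t - 1 →
      Q ^ 2 ≤
        (Matrix.of fun (u : ({i // i ∈ J} → Fin Q) × ({i // i ∈ J} → Fin Q))
            (c : ({i // i ∉ J} → Fin Q) × Fin Q × ({i // i ∉ J} → Fin Q)) =>
          psiOutStd Q t n k (by omega) U G ε ⟨n - t - 1, by omega⟩
            (mergeOn J u.1 c.1) c.2.1 (mergeOn J u.2 c.2.2)).rank := by
  exact fun J hJ hJt => stmt_11_general (by lia) huniform hUuni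
    (isStandardForm_finSumEquivOfFinset hUstd) hG (by rintro rfl; simp at hε) rfl hJ hJt
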